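/- Let H ∈ ℝ^{d×d} be a symmetric matrix, let S ∈ ℝ^{l×d}, and let ŝ ∈ ℝ^l with Sᵀŝ ≠ 0. Let α > 0, κ_S ≥ 0, S_max > 0 and ε_H > 0. Assume: (a) ‖S‖ ≤ S_max; (b) the smallest eigenvalue of the symmetric matrix S H Sᵀ satisfies λ_min(S H Sᵀ) < −ε_H; (c) for every y ∈ ℝ^l, ⟨y, S H Sᵀ y⟩ + (1/α)·[ ‖Sᵀŝ‖^{-1}·⟨S Sᵀŝ, y⟩² + ‖Sᵀŝ‖·‖Sᵀy‖² ] ≥ −κ_S·‖Sᵀŝ‖·‖y‖². Then ‖Sᵀŝ‖ ≥ ε_H·( 2·S_max²/α + κ_S )^{-1}. -/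

import Mathlib

open scoped BigOperators NNReal
open MeasureTheory ProbabilityTheory

namespace RARC

noncomputable def enorm {n : ℕ} (v : Fin n → ℝ) : ℝ := Real.sqrt (∑ i, v i ^ 2)

noncomputable def opNorm {m n : ℕ} (S : Matrix (Fin m) (Fin n) ℝ) : ℝ :=
  sSup {c : ℝ | ∃ v : Fin n → ℝ, enorm v = 1 ∧ c = enorm (S.mulVec v)}

noncomputable def grad {n : ℕ} (f : (Fin n → ℝ) → ℝ) (x : Fin n → ℝ) : Fin n → ℝ :=
  fun i => fderiv ℝ f x (Pi.single i 1)

noncomputable def hess {n : ℕ} (f : (Fin n → ℝ) → ℝ) (x : Fin n → ℝ) :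
    Matrix (Fin n) (Fin n) ℝ :=
  Matrix.of fun i j =>
    fderiv ℝ (fun y => fderiv ℝ f y (Pi.single j 1)) x (Pi.single i 1)

noncomputable def qhat {d l : ℕ} (f : (Fin d → ℝ) → ℝ) (x : Fin d → ℝ)
    (S : Matrix (Fin l) (Fin d) ℝ) (s : Fin l → ℝ) : ℝ :=
  f x + (∑ i, S.mulVec (grad f x) i * s i)
    + (1/2) * (∑ i, s i * (S * hess f x * S.transpose).mulVec s i)

noncomputable def mhat {d l : ℕ} (f : (Fin d → ℝ) → ℝ) (x : Fin d → ℝ)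
    (S : Matrix (Fin l) (Fin d) ℝ) (α : ℝ) (s : Fin l → ℝ) : ℝ :=
  qhat f x S s + (1/(3*α)) * enorm (S.transpose.mulVec s) ^ 3

noncomputable def lambdaMin {n : ℕ} (A : Matrix (Fin n) (Fin n) ℝ) : ℝ :=
  sInf {t : ℝ | ∃ v : Fin n → ℝ, enorm v = 1 ∧ t = ∑ i, v i * A.mulVec v i}

def LipschitzHessian {n : ℕ} (f : (Fin n → ℝ) → ℝ) (L : ℝ) : Prop :=
  ∀ x y : Fin n → ℝ, opNorm (hess f y - hess f x) ≤ L * enorm (y - x)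

noncomputable def augM {d : ℕ} (f : (Fin d → ℝ) → ℝ) (x : Fin d → ℝ) :
    Matrix (Fin d) (Fin (d+1)) ℝ :=
  Matrix.of fun i j => Fin.cases (grad f x i) (fun j' => hess f x i j') j

noncomputable def gaussVec (l : ℕ) : Measure (Fin l → ℝ) :=
  Measure.pi fun _ => gaussianReal 0 (l : ℝ≥0)⁻¹

noncomputable def scaledGaussian (l d : ℕ) : Measure (Fin l → Fin d → ℝ) :=
  Measure.pi fun _ : Fin l => Measure.pi fun _ : Fin d => gaussianReal 0 (l : ℝ≥0)⁻¹

/-!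
Pair the curvature bound (c) with a unit vector `y` along which `S H Sᵀ` has curvature below `-ε_H`.
By Cauchy–Schwarz, both terms of the second derivative of `‖Sᵀ·‖³ / 3` at `ŝ` along `y` are at most
`‖Sᵀŝ‖ ‖Sᵀy‖² ≤ ‖Sᵀŝ‖ S_max²`, so the negative curvature can only be compensated if
`ε_H < ‖Sᵀŝ‖ (2 S_max² / α + κ_S)`.
-/

open Metric WithLp
open scoped Matrix RealInnerProductSpace

section CubicRegularization

variable {E F : Type*} [NormedAddCommGroup E] [NormedSpace ℝ E]
  [NormedAddCommGroup F] [InnerProductSpace ℝ F]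

theorem inv_norm_mul_inner_sq_le (u v : F) : ‖u‖⁻¹ * ⟪u, v⟫ ^ 2 ≤ ‖u‖ * ‖v‖ ^ 2 := by
  have cauchy_schwarz : ⟪u, v⟫ ^ 2 ≤ ‖u‖ * (‖u‖ * ‖v‖ ^ 2) := by
    rw [← mul_assoc, ← sq, ← mul_pow]
    exact sq_le_sq.2 ((abs_real_inner_le_norm u v).trans (le_abs_self _))
  exact inv_mul_le_of_le_mul₀ (norm_nonneg u) (by positivity) cauchy_schwarz

theorem inv_norm_mul_inner_sq_add_le (T : E →L[ℝ] F) {K : ℝ} (hT : ‖T‖ ≤ K) (x y : E) :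
    ‖T x‖⁻¹ * ⟪T x, T y⟫ ^ 2 + ‖T x‖ * ‖T y‖ ^ 2 ≤ 2 * K ^ 2 * ‖T x‖ * ‖y‖ ^ 2 := by
  have hTy : ‖T y‖ ≤ K * ‖y‖ := T.le_of_opNorm_le hT y
  calc
    _ ≤ ‖T x‖ * ‖T y‖ ^ 2 + ‖T x‖ * ‖T y‖ ^ 2 :=
      add_le_add_left (inv_norm_mul_inner_sq_le (T x) (T y)) _
    _ ≤ ‖T x‖ * (K * ‖y‖) ^ 2 + ‖T x‖ * (K * ‖y‖) ^ 2 := by gcongr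
    _ = 2 * K ^ 2 * ‖T x‖ * ‖y‖ ^ 2 := by ring

theorem neg_mul_norm_sq_le_of_curvature_ge (T : E →L[ℝ] F) {K α κ q : ℝ} {x y : E}
    (hα : 0 ≤ α) (hT : ‖T‖ ≤ K)
    (hq : -κ * ‖T x‖ * ‖y‖ ^ 2 ≤
      q + 1 / α * (‖T x‖⁻¹ * ⟪T x, T y⟫ ^ 2 + ‖T x‖ * ‖T y‖ ^ 2)) :
    -(‖T x‖ * (2 * K ^ 2 / α + κ)) * ‖y‖ ^ 2 ≤ q := by
  have hcubic : 1 / α * (‖T x‖⁻¹ * ⟪T x, T y⟫ ^ 2 + ‖T x‖ * ‖T y‖ ^ 2) ≤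
      1 / α * (2 * K ^ 2 * ‖T x‖ * ‖y‖ ^ 2) := by
    gcongr
    exact inv_norm_mul_inner_sq_add_le T hT x y
  linear_combination hq + hcubic

/-- In the paper `T = Sᵀ`, `x = ŝ` and `q y = ⟨y, S H Sᵀ y⟩`. -/
theorem stmt10_general (T : E →L[ℝ] F) (q : E → ℝ) {x : E} (hx : T x ≠ 0) {K α κ ε : ℝ}
    (hα : 0 < α) (hε : 0 < ε) (hT : ‖T‖ ≤ K)
    (hq : (⨅ y : sphere (0 : E) 1, q y) < -ε)
    (hcurv : ∀ y, -κ * ‖T x‖ * ‖y‖ ^ 2 ≤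
      q y + 1 / α * (‖T x‖⁻¹ * ⟪T x, T y⟫ ^ 2 + ‖T x‖ * ‖T y‖ ^ 2)) :
    ε * (2 * K ^ 2 / α + κ)⁻¹ ≤ ‖T x‖ := by
  have : Nontrivial E := nontrivial_of_ne x 0 (ne_zero_of_map hx)
  have : Nonempty (sphere (0 : E) 1) := (NormedSpace.sphere_nonempty.2 zero_le_one).to_subtype
  obtain ⟨⟨y, hy⟩, hqy⟩ := exists_lt_of_ciInf_lt hq
  have hlower := neg_mul_norm_sq_le_of_curvature_ge T hα.le hT (hcurv y)
  rw [mem_sphere_zero_iff_norm.1 hy, one_pow, mul_one] at hlower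
  have hlt : ε < ‖T x‖ * (2 * K ^ 2 / α + κ) := neg_lt_neg_iff.1 (hlower.trans_lt hqy)
  have hpos : 0 < 2 * K ^ 2 / α + κ := pos_of_mul_pos_right (hε.trans hlt) (norm_nonneg _)
  exact (mul_inv_le_iff₀ hpos).2 hlt.le

end CubicRegularization

section Euclidean

variable {m n : ℕ}

/-- The matrix `S` as a bounded operator between Euclidean spaces; `Matrix.toEuclideanCLM` covers
only square matrices. -/
noncomputable def euclideanCLM (S : Matrix (Fin m) (Fin n) ℝ) :
    EuclideanSpace ℝ (Fin n) →L[ℝ] EuclideanSpace ℝ (Fin m) :=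
  (Matrix.toLpLin 2 2 S).toContinuousLinearMap

theorem enorm_eq_norm (v : Fin n → ℝ) : enorm v = ‖toLp 2 v‖ := by
  simp [enorm, EuclideanSpace.norm_eq]

theorem euclideanCLM_toLp (S : Matrix (Fin m) (Fin n) ℝ) (v : Fin n → ℝ) :
    euclideanCLM S (toLp 2 v) = toLp 2 (S *ᵥ v) :=
  rfl

theorem opNorm_eq_norm (S : Matrix (Fin m) (Fin n) ℝ) : opNorm S = ‖euclideanCLM S‖ := by
  rw [← ContinuousLinearMap.sSup_sphere_eq_norm, opNorm]
  congr 1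
  ext c
  simp only [Set.mem_ofPred_eq, Set.mem_image, mem_sphere_zero_iff_norm,
    (WithLp.equiv 2 (Fin n → ℝ)).exists_congr_left, enorm_eq_norm,
    ← euclideanCLM_toLp, eq_comm (a := c)]
  rfl

theorem norm_euclideanCLM_transpose (S : Matrix (Fin m) (Fin n) ℝ) :
    ‖euclideanCLM Sᵀ‖ = ‖euclideanCLM S‖ :=
  S.conjTranspose_eq_transpose_of_trivial ▸ S.l2_opNorm_conjTranspose

theorem lambdaMin_eq_iInf (A : Matrix (Fin n) (Fin n) ℝ) :
    lambdaMin A =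
      ⨅ y : sphere (0 : EuclideanSpace ℝ (Fin n)) 1, ∑ i, y.1 i * (A *ᵥ ofLp y.1) i := by
  rw [lambdaMin, iInf]
  congr 1
  ext t
  simp only [Set.mem_ofPred_eq, Set.mem_range, Subtype.exists, mem_sphere_zero_iff_norm,
    (WithLp.equiv 2 (Fin n → ℝ)).exists_congr_left, enorm_eq_norm, eq_comm (a := t)]
  simp

theorem sum_mul_transpose_mulVec_mul (S : Matrix (Fin m) (Fin n) ℝ) (u v : Fin m → ℝ) :
    ∑ i, ((S * Sᵀ) *ᵥ u) i * v i =
      ⟪euclideanCLM Sᵀ (toLp 2 u), euclideanCLM Sᵀ (toLp 2 v)⟫ := by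
  rw [euclideanCLM_toLp, euclideanCLM_toLp, EuclideanSpace.inner_toLp_toLp, star_trivial,
    Matrix.mulVec_transpose S v, ← Matrix.dotProduct_mulVec, Matrix.mulVec_mulVec,
    dotProduct_comm, dotProduct]

end Euclidean

theorem stmt10 {d l : ℕ} (H : Matrix (Fin d) (Fin d) ℝ) (hH : H.IsSymm)
    (S : Matrix (Fin l) (Fin d) ℝ) (sh : Fin l → ℝ)
    (hs : S.transpose.mulVec sh ≠ 0)
    (α κ_S S_max ε_H : ℝ) (hα : 0 < α) (hκ : 0 ≤ κ_S) (hSmax : 0 < S_max)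
    (hεH : 0 < ε_H)
    (ha : opNorm S ≤ S_max)
    (hb : lambdaMin (S * H * S.transpose) < -ε_H)
    (hc : ∀ y : Fin l → ℝ,
      (∑ i, y i * (S * H * S.transpose).mulVec y i)
        + (1/α) * ((enorm (S.transpose.mulVec sh))⁻¹
              * (∑ i, (S * S.transpose).mulVec sh i * y i) ^ 2
            + enorm (S.transpose.mulVec sh) * enorm (S.transpose.mulVec y) ^ 2)
        ≥ -κ_S * enorm (S.transpose.mulVec sh) * enorm y ^ 2) :
    enorm (S.transpose.mulVec sh) ≥ ε_H * (2 * S_max ^ 2 / α + κ_S)⁻¹ := by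
  simp only [enorm_eq_norm, opNorm_eq_norm, lambdaMin_eq_iInf, ← euclideanCLM_toLp,
    sum_mul_transpose_mulVec_mul] at ha hb hc ⊢
  exact stmt10_general (euclideanCLM Sᵀ) _ (mt (congrArg ofLp) hs) hα hεH
    ((norm_euclideanCLM_transpose S).trans_le ha) hb fun y ↦ hc (ofLp y)

end RARC
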